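/- The function f : [0,∞) → [0,∞) defined by f(x) = x for x ≤ 1 and f(x) = 1/2 for x > 1 is ultrametric-metric-preserving, but it is neither metric-preserving nor ultrametric-preserving. -/

import Mathlib

def IsMetric {X : Type*} (d : X → X → ℝ) : Prop :=
  (∀ x y, 0 ≤ d x y) ∧ (∀ x y, d x y = 0 ↔ x = y) ∧
  (∀ x y, d x y = d y x) ∧ (∀ x y z, d x y ≤ d x z + d z y)

def IsUltrametric {X : Type*} (d : X → X → ℝ) : Prop :=
  (∀ x y, 0 ≤ d x y) ∧ (∀ x y, d x y = 0 ↔ x = y) ∧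
  (∀ x y, d x y = d y x) ∧ (∀ x y z, d x y ≤ max (d x z) (d z y))

def MetricPreserving (f : ℝ → ℝ) : Prop :=
  ∀ (X : Type) (d : X → X → ℝ), IsMetric d → IsMetric fun x y => f (d x y)

def UltrametricPreserving (f : ℝ → ℝ) : Prop :=
  ∀ (X : Type) (d : X → X → ℝ), IsUltrametric d → IsUltrametric fun x y => f (d x y)

def MetricUltrametricPreserving (f : ℝ → ℝ) : Prop :=
  ∀ (X : Type) (d : X → X → ℝ), IsMetric d → IsUltrametric fun x y => f (d x y)

def UltrametricMetricPreserving (f : ℝ → ℝ) : Prop :=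
  ∀ (X : Type) (d : X → X → ℝ), IsUltrametric d → IsMetric fun x y => f (d x y)

def Amenable (f : ℝ → ℝ) : Prop :=
  ∀ x, 0 ≤ x → (f x = 0 ↔ x = 0)

noncomputable def f17 : ℝ → ℝ := fun x => if x ≤ 1 then x else 1 / 2

/-!
In an ultrametric triangle the two longest sides are equal. Hence an amenable `f` with
`f a ≤ 2 * f b` for `a ≤ b` turns such triangles into metric ones, and `f17` satisfies this bound
because it is the identity up to `1`, where it is largest, and equals `1 / 2` beyond `1`. On the
other hand, ultrametric-preserving functions are monotone and metric-preserving ones satisfy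
`|f a - f b| ≤ f |a - b|`, both of which the drop of `f17` just after `1` violates.
-/

theorem IsUltrametric.eq_max_of_ne {X : Type*} {d : X → X → ℝ} (hd : IsUltrametric d) {x y z : X}
    (hne : d x z ≠ d z y) : d x y = max (d x z) (d z y) := by
  obtain ⟨-, -, symm, ultra⟩ := hd
  refine le_antisymm (ultra x y z) ?_
  rcases lt_or_gt_of_ne hne with hlt | hlt
  · have hzy : d z y ≤ max (d x z) (d x y) := symm x z ▸ ultra z y x
    rw [max_eq_right hlt.le]
    exact (le_max_iff.mp hzy).resolve_left hlt.not_ge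
  · have hxz : d x z ≤ max (d x y) (d z y) := symm z y ▸ ultra x z y
    rw [max_eq_left hlt.le]
    exact (le_max_iff.mp hxz).resolve_right hlt.not_ge

theorem UltrametricMetricPreserving.of_amenable_of_le_two_mul {f : ℝ → ℝ} (hf : Amenable f)
    (hle : ∀ a b, 0 ≤ a → a ≤ b → f a ≤ 2 * f b) : UltrametricMetricPreserving f := by
  intro X d hd
  have ⟨nonneg, eq_zero, symm, ultra⟩ := hd
  have f_nonneg (x y : X) : 0 ≤ f (d x y) := by
    linarith [hle 0 (d x y) le_rfl (nonneg x y), (hf 0 le_rfl).mpr rfl]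
  refine ⟨f_nonneg, fun x y => (hf _ (nonneg x y)).trans (eq_zero x y),
    fun x y => congrArg f (symm x y), fun x y z => ?_⟩
  by_cases hlegs : d x z = d z y
  · have hxy : d x y ≤ d z y := by simpa only [hlegs, max_self] using ultra x y z
    calc f (d x y) ≤ 2 * f (d z y) := hle _ _ (nonneg x y) hxy
      _ = f (d x z) + f (d z y) := by rw [hlegs, two_mul]
  · change f (d x y) ≤ f (d x z) + f (d z y)
    rw [hd.eq_max_of_ne hlegs]
    rcases max_choice (d x z) (d z y) with hmax | hmax <;> rw [hmax]
    · exact le_add_of_nonneg_right (f_nonneg z y)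
    · exact le_add_of_nonneg_left (f_nonneg x z)

/-- The ultrametric on `[0, ∞)` in which distinct points are at distance their maximum. It realises
every isosceles triangle with legs `b` and base `0 < a < b`, on the points `0`, `a` and `b`. -/
noncomputable def maxDist (x y : NNReal) : ℝ :=
  if x = y then 0 else max (x : ℝ) y

theorem maxDist_zero_left (x : NNReal) : maxDist 0 x = x := by
  by_cases hx : 0 = x
  · simp [maxDist, ← hx]
  · simp [maxDist, hx]

theorem maxDist_of_lt {x y : NNReal} (hxy : x < y) : maxDist y x = y := by
  rw [maxDist, if_neg hxy.ne', max_eq_left (NNReal.coe_le_coe.mpr hxy.le)]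

theorem isUltrametric_maxDist : IsUltrametric maxDist := by
  refine ⟨fun x y => ?_, fun x y => ?_, fun x y => ?_, fun x y z => ?_⟩
  · unfold maxDist
    split_ifs <;> positivity
  · have eq_of_max_eq_zero (hmax : max (x : ℝ) y = 0) : x = y :=
      NNReal.eq (by grind [x.coe_nonneg, y.coe_nonneg])
    grind [maxDist]
  · grind [maxDist]
  · grind [maxDist, x.coe_nonneg, y.coe_nonneg, z.coe_nonneg]

theorem UltrametricPreserving.monotoneOn {f : ℝ → ℝ} (hf : UltrametricPreserving f) :
    MonotoneOn f (Set.Ici 0) := by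
  intro a ha b hb hab
  lift a to NNReal using ha
  lift b to NNReal using hb
  rcases hab.eq_or_lt with heq | hlt
  · rw [heq]
  · have htri := (hf NNReal maxDist isUltrametric_maxDist).2.2.2 0 a b
    simpa only [maxDist_zero_left, maxDist_of_lt (NNReal.coe_lt_coe.mp hlt), max_self] using htri

theorem isMetric_dist (X : Type*) [MetricSpace X] : IsMetric (dist : X → X → ℝ) :=
  ⟨fun _ _ => dist_nonneg, fun _ _ => dist_eq_zero, dist_comm, fun x y z => dist_triangle x z y⟩

theorem MetricPreserving.abs_sub_apply_le {f : ℝ → ℝ} (hf : MetricPreserving f) {a b : ℝ}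
    (ha : 0 ≤ a) (hb : 0 ≤ b) : |f a - f b| ≤ f |a - b| := by
  obtain ⟨-, -, -, triangle⟩ := hf ℝ dist (isMetric_dist ℝ)
  have hab : f a ≤ f b + f |a - b| := by
    simpa [Real.dist_eq, abs_of_nonneg, ha, hb, abs_sub_comm b a] using triangle 0 a b
  have hba : f b ≤ f a + f |a - b| := by
    simpa [Real.dist_eq, abs_of_nonneg, ha, hb] using triangle 0 b a
  exact abs_sub_le_iff.mpr ⟨sub_le_iff_le_add'.mpr hab, sub_le_iff_le_add'.mpr hba⟩

theorem f17_of_le_one {x : ℝ} (hx : x ≤ 1) : f17 x = x :=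
  if_pos hx

theorem f17_of_one_lt {x : ℝ} (hx : 1 < x) : f17 x = 1 / 2 :=
  if_neg hx.not_ge

theorem f17_le_one (x : ℝ) : f17 x ≤ 1 := by
  unfold f17
  split_ifs <;> linarith

theorem amenable_f17 : Amenable f17 := by
  intro x _
  rcases le_or_gt x 1 with hx | hx
  · rw [f17_of_le_one hx]
  · rw [f17_of_one_lt hx]
    constructor <;> intro h <;> linarith

theorem f17_le_two_mul {a b : ℝ} (ha : 0 ≤ a) (hab : a ≤ b) : f17 a ≤ 2 * f17 b := by
  rcases le_or_gt b 1 with hb | hb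
  · rw [f17_of_le_one hb, f17_of_le_one (hab.trans hb)]
    linarith
  · rw [f17_of_one_lt hb]
    linarith [f17_le_one a]

theorem stmt17 :
    UltrametricMetricPreserving f17 ∧
      ¬ MetricPreserving f17 ∧ ¬ UltrametricPreserving f17 := by
  refine ⟨.of_amenable_of_le_two_mul amenable_f17 fun _ _ => f17_le_two_mul,
    fun hf => ?_, fun hf => ?_⟩
  · have hjump : |f17 1 - f17 (11 / 10)| ≤ f17 |1 - 11 / 10| :=
      hf.abs_sub_apply_le (by norm_num) (by norm_num)
    have hgap : |(1 : ℝ) - 11 / 10| = 1 / 10 := by norm_num [abs_of_neg]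
    rw [hgap, f17_of_le_one le_rfl, f17_of_one_lt (by norm_num),
      f17_of_le_one (by norm_num)] at hjump
    norm_num [abs_of_pos] at hjump
  · have hmono : f17 1 ≤ f17 2 := hf.monotoneOn (by simp) (by simp) one_le_two
    rw [f17_of_le_one le_rfl, f17_of_one_lt one_lt_two] at hmono
    norm_num at hmono
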